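/- Let n ≥ 2 and let Ω ⊂ ℝ^n be an open, bounded, (η, r₀)-Reifenberg flat set with 0 < η < 1/4. Then for every x ∈ ∂Ω and every 0 < r < r₀ there exists a unit vector ν ∈ ℝ^n such that the open ball of radius r/8 centered at x + (1/8 + η) r ν is contained in Ω. -/

import Mathlib

open Metric Set RealInnerProductSpace

/-- `Ω ⊆ ℝⁿ` is `(η, r₀)`-Reifenberg flat: for every boundary point `x` and scale
`0 < r < r₀` there is a hyperplane through `x` (given by a unit normal `ν`) that
approximates `∂Ω` in `B_r(x)` up to Hausdorff distance `η r`, and the two connected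
components of `{y ∈ B_r(x) : dist(y, H) ≥ 2ηr}` lie in `Ω` and `Ωᶜ` respectively. -/
def ReifenbergFlat {n : ℕ} (Ω : Set (EuclideanSpace ℝ (Fin n))) (η r₀ : ℝ) : Prop :=
  ∀ x ∈ frontier Ω, ∀ r : ℝ, 0 < r → r < r₀ →
    ∃ ν : EuclideanSpace ℝ (Fin n), ‖ν‖ = 1 ∧
      Metric.hausdorffDist (frontier Ω ∩ ball x r)
        ({y | ⟪y - x, ν⟫ = 0} ∩ ball x r) ≤ η * r ∧
      {y | y ∈ ball x r ∧ 2 * η * r ≤ ⟪y - x, ν⟫} ⊆ Ω ∧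
      {y | y ∈ ball x r ∧ ⟪y - x, ν⟫ ≤ -(2 * η * r)} ⊆ Ωᶜ

/-!
With `δ = η r` the Hausdorff bound, every point of `∂Ω ∩ B_r(x)` has height at most `δ` over the
hyperplane, while the ball of radius `ρ = r / 8` centred at height `ρ + δ` lies strictly above
height `δ`. That ball is connected and misses `∂Ω`, so it lies in `Ω` as soon as it meets `Ω`. It
does: it reaches every height below `2ρ + δ`, and `2δ < 2ρ + δ` is exactly `η < 1/4`.
-/

theorem subset_of_isPreconnected_of_disjoint_frontier {X : Type*} [TopologicalSpace X]
    {s t : Set X} (ht : IsPreconnected t) (hts : (t ∩ s).Nonempty)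
    (hdisj : Disjoint t (frontier s)) : t ⊆ s := by
  have nonempty_inter_interior : (t ∩ interior s).Nonempty := by
    obtain ⟨y, hyt, hys⟩ := hts
    exact ⟨y, hyt, self_sdiff_frontier s ▸ ⟨hys, hdisj.notMem_of_mem_left hyt⟩⟩
  have closure_interior_inter_subset : closure (interior s) ∩ t ⊆ interior s := by
    rintro y ⟨hys, hyt⟩
    exact closure_sdiff_frontier s ▸
      ⟨closure_mono interior_subset hys, hdisj.notMem_of_mem_left hyt⟩
  exact (ht.subset_of_closure_inter_subset isOpen_interior nonempty_inter_interior
    closure_interior_inter_subset).trans interior_subset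

section UnitNormal

variable {E : Type*} [NormedAddCommGroup E] [InnerProductSpace ℝ E] {ν : E}

theorem inner_sub_le_dist (hν : ‖ν‖ ≤ 1) (y z : E) : ⟪y - z, ν⟫ ≤ dist y z :=
  calc ⟪y - z, ν⟫ ≤ ‖y - z‖ * ‖ν‖ := real_inner_le_norm _ _
    _ ≤ ‖y - z‖ := mul_le_of_le_one_right (norm_nonneg _) hν
    _ = dist y z := (dist_eq_norm y z).symm

theorem inner_smul_self_of_norm_eq_one (hν : ‖ν‖ = 1) (a : ℝ) : ⟪a • ν, ν⟫ = a := by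
  rw [real_inner_smul_left, inner_self_eq_one_of_norm_eq_one hν, mul_one]

theorem dist_add_smul_add_smul_of_norm_eq_one (hν : ‖ν‖ = 1) (x : E) (a b : ℝ) :
    dist (x + a • ν) (x + b • ν) = |a - b| := by
  rw [dist_add_left, dist_eq_norm, ← sub_smul, norm_smul, hν, mul_one, Real.norm_eq_abs]

theorem sub_lt_inner_sub_of_mem_ball_add_smul (hν : ‖ν‖ = 1) {x y : E} {a ρ : ℝ}
    (hy : y ∈ ball (x + a • ν) ρ) : a - ρ < ⟪y - x, ν⟫ := by
  have drop_lt : ⟪(x + a • ν) - y, ν⟫ < ρ :=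
    (inner_sub_le_dist hν.le _ _).trans_lt (mem_ball'.mp hy)
  have height_eq : y - x = a • ν - ((x + a • ν) - y) := by abel
  rw [height_eq, inner_sub_left, inner_smul_self_of_norm_eq_one hν]
  linarith

theorem inner_sub_le_infDist (hν : ‖ν‖ ≤ 1) {H : Set E} (hH : H.Nonempty) {x : E}
    (hHx : H ⊆ {y | ⟪y - x, ν⟫ = 0}) (p : E) : ⟪p - x, ν⟫ ≤ infDist p H := by
  refine (le_infDist hH).mpr fun y hy ↦ ?_
  calc ⟪p - x, ν⟫ = ⟪p - y, ν⟫ + ⟪y - x, ν⟫ := by rw [← inner_add_left, sub_add_sub_cancel]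
    _ = ⟪p - y, ν⟫ := by rw [show ⟪y - x, ν⟫ = 0 from hHx hy, add_zero]
    _ ≤ dist p y := inner_sub_le_dist hν p y

theorem inner_sub_le_hausdorffDist_inter_ball (hν : ‖ν‖ ≤ 1) {A : Set E} {x p : E} {r : ℝ}
    (hp : p ∈ A ∩ ball x r) :
    ⟪p - x, ν⟫ ≤ hausdorffDist (A ∩ ball x r) ({y | ⟪y - x, ν⟫ = 0} ∩ ball x r) := by
  have hH : ({y | ⟪y - x, ν⟫ = 0} ∩ ball x r).Nonempty :=
    ⟨x, by simp, mem_ball_self (pos_of_mem_ball hp.2)⟩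
  have hfin := hausdorffEDist_ne_top_of_nonempty_of_bounded ⟨p, hp⟩ hH
    (isBounded_ball.subset inter_subset_right) (isBounded_ball.subset inter_subset_right)
  exact (inner_sub_le_infDist hν hH inter_subset_left p).trans
    (infDist_le_hausdorffDist_of_mem hp hfin)

theorem interior_ball_condition_general (hν : ‖ν‖ = 1) {s : Set E} {x : E} {r δ t ρ : ℝ}
    (hρ : 0 < ρ) (hρr : 2 * ρ + δ ≤ r) (ht : t < 2 * ρ + δ)
    (hflat : hausdorffDist (frontier s ∩ ball x r) ({y | ⟪y - x, ν⟫ = 0} ∩ ball x r) ≤ δ)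
    (hcap : {y | y ∈ ball x r ∧ t ≤ ⟪y - x, ν⟫} ⊆ s) :
    ball (x + (ρ + δ) • ν) ρ ⊆ s := by
  have hδ : 0 ≤ δ := hausdorffDist_nonneg.trans hflat
  have ball_subset : ball (x + (ρ + δ) • ν) ρ ⊆ ball x r := by
    refine ball_subset_ball' ?_
    rw [dist_self_add_left, norm_smul, hν, mul_one, Real.norm_of_nonneg (by positivity)]
    linarith
  have disjoint_frontier : Disjoint (ball (x + (ρ + δ) • ν) ρ) (frontier s) := by
    refine disjoint_left.mpr fun y hy hys ↦ ?_
    have above := sub_lt_inner_sub_of_mem_ball_add_smul hν hy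
    have below := inner_sub_le_hausdorffDist_inter_ball hν.le ⟨hys, ball_subset hy⟩
    linarith
  have inter_nonempty : (ball (x + (ρ + δ) • ν) ρ ∩ s).Nonempty := by
    obtain ⟨τ, hτ, hτρ⟩ := exists_between (max_lt ht (by linarith : δ < 2 * ρ + δ))
    obtain ⟨htτ, hδτ⟩ := max_lt_iff.mp hτ
    have mem_ball_τ : x + τ • ν ∈ ball (x + (ρ + δ) • ν) ρ := by
      rw [mem_ball, dist_add_smul_add_smul_of_norm_eq_one hν, abs_lt]
      constructor <;> linarith
    refine ⟨x + τ • ν, mem_ball_τ, hcap ⟨ball_subset mem_ball_τ, ?_⟩⟩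
    rw [add_sub_cancel_left, inner_smul_self_of_norm_eq_one hν]
    exact htτ.le
  exact subset_of_isPreconnected_of_disjoint_frontier (convex_ball _ _).isPreconnected
    inter_nonempty disjoint_frontier

end UnitNormal

theorem interior_ball_condition (n : ℕ) (hn : 2 ≤ n)
    (Ω : Set (EuclideanSpace ℝ (Fin n))) (hΩo : IsOpen Ω)
    (hΩb : Bornology.IsBounded Ω) (η r₀ : ℝ) (hη0 : 0 < η) (hη : η < 1/4)
    (hr₀ : 0 < r₀) (hRF : ReifenbergFlat Ω η r₀) :
    ∀ x ∈ frontier Ω, ∀ r : ℝ, 0 < r → r < r₀ →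
      ∃ ν : EuclideanSpace ℝ (Fin n), ‖ν‖ = 1 ∧
        ball (x + ((1/8 + η) * r) • ν) (r/8) ⊆ Ω := by
  intro x hx r hr hrr₀
  obtain ⟨ν, hν, hflat, hcap, -⟩ := hRF x hx r hr hrr₀
  have hηr : η * r < r / 4 := by nlinarith
  have height_eq : (1 / 8 + η) * r = r / 8 + η * r := by ring
  exact ⟨ν, hν, height_eq ▸ interior_ball_condition_general hν (by linarith) (by linarith)
    (by linarith) hflat hcap⟩
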